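/- Let d ≥ 1 and α > 0. Assume c₁,…,c_d > 0 satisfy ∏_{i=1}^d c_i = 1 and not all c_i equal 1. Define P₃₄(t) = ∏_{i=1}^{d} θ₃(c_i^t α)·θ₄(c_i^t α) and P₂₃(t) = ∏_{i=1}^{d} θ₂(c_i^t α)·θ₃(c_i^t α) for t ∈ ℝ. Then for each f ∈ {P₃₄, P₂₃}: f'(0) = 0, f'(t) > 0 for t < 0, and f'(t) < 0 for t > 0; in particular t = 0 is the unique strict maximum of f. -/

import Mathlib

/-!
Write `ε_F(x) = x F'(x) / F(x)` for the slope of `log F` in the variable `log x`. For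
`f(t) = ∏ F(c_i^t α)` the chain rule gives `f' / f = ∑ log c_i · ε_F(c_i^t α)`. At `t = 0` this is
`ε_F(α) · log ∏ c_i = 0`, and if `ε_F` is strictly decreasing then so is every summand with
`c_i ≠ 1`. Hence `f'` vanishes exactly at `0`, where it passes from positive to negative.

It remains to see that `ε_F` decreases strictly for `F = θ₃θ₄` and `F = θ₂θ₃`. By the Jacobi
triple product `θ₃θ₄` is a product of factors `1 - e^{-ax}`, whose elasticities `ax / (e^{ax} - 1)`
decrease strictly. Poisson summation gives `θ₂θ₃(x) = x⁻¹ θ₃θ₄(x⁻¹)`, and both the inversion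
`x ↦ x⁻¹` and multiplication by a power of `x` preserve the property.
-/

open scoped BigOperators

/-- The classical Jacobi theta function `θ₂(x) = Σ_{k∈ℤ} e^{−π(k+1/2)²x}`. -/
noncomputable def theta2 (x : ℝ) : ℝ :=
  ∑' n : ℤ, Real.exp (-Real.pi * ((n : ℝ) + 1 / 2) ^ 2 * x)

/-- The classical Jacobi theta function `θ₃(x) = Σ_{k∈ℤ} e^{−πk²x}`. -/
noncomputable def theta3 (x : ℝ) : ℝ :=
  ∑' n : ℤ, Real.exp (-Real.pi * (n : ℝ) ^ 2 * x)

/-- The classical Jacobi theta function `θ₄(x) = Σ_{k∈ℤ} (−1)^k e^{−πk²x}`. -/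
noncomputable def theta4 (x : ℝ) : ℝ :=
  ∑' n : ℤ, (-1 : ℝ) ^ n * Real.exp (-Real.pi * (n : ℝ) ^ 2 * x)

open Filter Topology

/-! ### Gaussian binomial coefficients -/

/-- The finite `q`-Pochhammer symbol `(q; q)_n = ∏_{k=1}^n (1 - q^k)`. -/
def qPochhammer {R : Type*} [CommRing R] (q : R) (n : ℕ) : R :=
  ∏ k ∈ Finset.range n, (1 - q ^ (k + 1))

/-- The Gaussian binomial coefficient `[n choose m]_q`, defined by the `q`-Pascal rule so that it
makes sense, without division, over any commutative semiring. -/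
def gaussBinom {R : Type*} [CommSemiring R] (q : R) : ℕ → ℕ → R
  | _, 0 => 1
  | 0, _ + 1 => 0
  | n + 1, m + 1 => gaussBinom q n m + q ^ (m + 1) * gaussBinom q n (m + 1)

section Algebra

variable {R : Type*}

@[simp] lemma gaussBinom_zero_right [CommSemiring R] (q : R) (n : ℕ) : gaussBinom q n 0 = 1 := by
  cases n <;> rfl

lemma gaussBinom_eq_zero_of_lt [CommSemiring R] (q : R) :
    ∀ {n m : ℕ}, n < m → gaussBinom q n m = 0
  | 0, _ + 1, _ => rfl
  | n + 1, m + 1, h => by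
    rw [gaussBinom, gaussBinom_eq_zero_of_lt q (by omega), gaussBinom_eq_zero_of_lt q (by omega),
      mul_zero, add_zero]

lemma gaussBinom_self [CommSemiring R] (q : R) : ∀ n : ℕ, gaussBinom q n n = 1
  | 0 => rfl
  | n + 1 => by
    rw [gaussBinom, gaussBinom_self q n, gaussBinom_eq_zero_of_lt q n.lt_succ_self, mul_zero,
      add_zero]

lemma qPochhammer_succ [CommRing R] (q : R) (n : ℕ) :
    qPochhammer q (n + 1) = qPochhammer q n * (1 - q ^ (n + 1)) :=
  Finset.prod_range_succ _ _

lemma gaussBinom_mul_qPochhammer_mul_qPochhammer [CommRing R] (q : R) :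
    ∀ m k : ℕ, gaussBinom q (m + k) m * (qPochhammer q m * qPochhammer q k) =
      qPochhammer q (m + k)
  | 0, k => by simp [qPochhammer]
  | m + 1, 0 => by simp [gaussBinom_self, qPochhammer]
  | m + 1, k + 1 => by
    have left := gaussBinom_mul_qPochhammer_mul_qPochhammer q m (k + 1)
    have right := gaussBinom_mul_qPochhammer_mul_qPochhammer q (m + 1) k
    rw [show m + 1 + k = m + (k + 1) by ring, qPochhammer_succ q m] at right
    rw [qPochhammer_succ q k] at left
    rw [show m + 1 + (k + 1) = m + (k + 1) + 1 by ring, gaussBinom, qPochhammer_succ q m,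
      qPochhammer_succ q k, qPochhammer_succ q (m + (k + 1))]
    linear_combination (1 - q ^ (m + 1)) * left + q ^ (m + 1) * (1 - q ^ (k + 1)) * right

/-- Rothe's `q`-binomial theorem. -/
theorem prod_one_add_mul_pow_eq_sum_gaussBinom [CommSemiring R] (q x : R) (n : ℕ) :
    ∏ k ∈ Finset.range n, (1 + x * q ^ k) =
      ∑ m ∈ Finset.range (n + 1), q ^ m.choose 2 * gaussBinom q n m * x ^ m := by
  induction n generalizing x with
  | zero => simp
  | succ n ih =>
    set S := ∑ m ∈ Finset.range (n + 1), q ^ m.choose 2 * gaussBinom q n m * (x * q) ^ m with hS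
    have hprod : ∏ k ∈ Finset.range (n + 1), (1 + x * q ^ k) = S * (1 + x) := by
      rw [Finset.prod_range_succ', hS, ← ih]
      simp only [pow_succ', mul_assoc, pow_zero, mul_one]
    have hshift : ∑ m ∈ Finset.range (n + 1),
        q ^ (m + 1).choose 2 * gaussBinom q n (m + 1) * (x * q) ^ (m + 1) + 1 = S := by
      have := Finset.sum_range_succ'
        (fun m => q ^ m.choose 2 * gaussBinom q n m * (x * q) ^ m) (n + 1)
      rw [Finset.sum_range_succ, gaussBinom_eq_zero_of_lt q n.lt_succ_self] at this
      simpa using this.symm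
    have hpascal : ∀ m, q ^ (m + 1).choose 2 * gaussBinom q (n + 1) (m + 1) * x ^ (m + 1) =
        q ^ m.choose 2 * gaussBinom q n m * (x * q) ^ m * x +
          q ^ (m + 1).choose 2 * gaussBinom q n (m + 1) * (x * q) ^ (m + 1) := fun m => by
      rw [gaussBinom, Nat.choose_succ_succ' m 1, Nat.choose_one_right]
      ring
    calc ∏ k ∈ Finset.range (n + 1), (1 + x * q ^ k)
      _ = S * x + S := by rw [hprod]; ring
      _ = ∑ m ∈ Finset.range (n + 1), (q ^ m.choose 2 * gaussBinom q n m * (x * q) ^ m * x +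
            q ^ (m + 1).choose 2 * gaussBinom q n (m + 1) * (x * q) ^ (m + 1)) + 1 := by
          rw [Finset.sum_add_distrib, ← Finset.sum_mul, ← hS, add_assoc, hshift]
      _ = ∑ m ∈ Finset.range (n + 1 + 1),
            q ^ m.choose 2 * gaussBinom q (n + 1) m * x ^ m := by
          rw [Finset.sum_range_succ' _ (n + 1), Finset.sum_congr rfl fun m _ => hpascal m]
          simp

end Algebra

section FiniteTripleProduct

variable {K : Type*} [Field K]

lemma two_mul_choose_two_add_self (m : ℕ) : 2 * m.choose 2 + m = m ^ 2 := by
  induction m with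
  | zero => rfl
  | succ m ih =>
    rw [Nat.choose_succ_succ' m 1, Nat.choose_one_right]
    linear_combination ih

lemma pow_choose_two_mul_pow_eq_zpow {q z : K} (hq : q ≠ 0) (hz : z ≠ 0) (n m : ℕ) :
    (q ^ 2) ^ m.choose 2 * (z * q / q ^ (2 * n)) ^ m =
      z ^ n / q ^ n ^ 2 * (z ^ ((m : ℤ) - n) * q ^ (((m : ℤ) - n) ^ 2)) := by
  have hz_pow : z ^ ((m : ℤ) - n) = z ^ m / z ^ n := by
    rw [zpow_sub₀ hz, zpow_natCast, zpow_natCast]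
  have hq_pow : q ^ (((m : ℤ) - n) ^ 2) = q ^ m ^ 2 * q ^ n ^ 2 / q ^ (2 * n * m) := by
    rw [show ((m : ℤ) - n) ^ 2 = (m ^ 2 + n ^ 2 : ℕ) - (2 * n * m : ℕ) by push_cast; ring,
      zpow_sub₀ hq, zpow_natCast, zpow_natCast, pow_add]
  have hq_choose : (q ^ 2) ^ m.choose 2 * q ^ m = q ^ m ^ 2 := by
    rw [← two_mul_choose_two_add_self, pow_add, pow_mul]
  rw [hz_pow, hq_pow, ← hq_choose, div_pow, mul_pow, pow_mul q (2 * n) m]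
  field_simp

lemma prod_one_add_div_pow_odd {q z : K} (hq : q ≠ 0) (hz : z ≠ 0) (n : ℕ) :
    ∏ k ∈ Finset.range n, (1 + z / q ^ (2 * k + 1)) =
      z ^ n / q ^ n ^ 2 * ∏ k ∈ Finset.range n, (1 + z⁻¹ * q ^ (2 * k + 1)) := by
  induction n with
  | zero => simp
  | succ n ih =>
    rw [Finset.prod_range_succ, Finset.prod_range_succ, ih,
      show (n + 1) ^ 2 = n ^ 2 + (2 * n + 1) by ring, pow_add]
    field_simp
    ring

/-- Rothe's theorem with `2n` factors at `x = z q^{1-2n}` and base `q²`. -/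
theorem prod_one_add_odd_pow_eq_sum_gaussBinom {q z : K} (hq : q ≠ 0) (hz : z ≠ 0) (n : ℕ) :
    ∏ k ∈ Finset.range n, (1 + z * q ^ (2 * k + 1)) * (1 + z⁻¹ * q ^ (2 * k + 1)) =
      ∑ j ∈ Finset.Icc (-n : ℤ) n,
        gaussBinom (q ^ 2) (2 * n) (n + j).toNat * (z ^ j * q ^ (j ^ 2)) := by
  have hlow : ∏ k ∈ Finset.range n, (1 + z * q / q ^ (2 * n) * (q ^ 2) ^ k) =
      ∏ k ∈ Finset.range n, (1 + z / q ^ (2 * k + 1)) := by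
    rw [← Finset.prod_range_reflect]
    refine Finset.prod_congr rfl fun k hk => ?_
    obtain ⟨l, rfl⟩ := Nat.exists_eq_add_of_lt (Finset.mem_range.1 hk)
    rw [show k + l + 1 - 1 - k = l by omega]
    field_simp
    ring
  have hhigh : ∏ k ∈ Finset.range n, (1 + z * q / q ^ (2 * n) * (q ^ 2) ^ (n + k)) =
      ∏ k ∈ Finset.range n, (1 + z * q ^ (2 * k + 1)) := by
    refine Finset.prod_congr rfl fun k _ => ?_
    field_simp
    ring
  have hrothe := prod_one_add_mul_pow_eq_sum_gaussBinom (q ^ 2) (z * q / q ^ (2 * n)) (n + n)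
  rw [Finset.prod_range_add, hlow, hhigh, prod_one_add_div_pow_odd hq hz] at hrothe
  rw [Finset.prod_mul_distrib, mul_comm]
  refine mul_left_cancel₀ (div_ne_zero (pow_ne_zero n hz) (pow_ne_zero (n ^ 2) hq)) ?_
  rw [← mul_assoc, hrothe, Finset.mul_sum]
  refine Finset.sum_nbij' (fun m => (m : ℤ) - n) (fun j => (n + j).toNat)
    (fun m hm => ?_) (fun j hj => ?_) (fun m _ => by simp) (fun j hj => ?_) (fun m _ => ?_)
  · simp only [Finset.mem_range, Finset.mem_Icc] at hm ⊢; omega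
  · simp only [Finset.mem_range, Finset.mem_Icc] at hj ⊢; omega
  · simp only [Finset.mem_Icc] at hj ⊢; omega
  · rw [mul_right_comm, pow_choose_two_mul_pow_eq_zpow hq hz, add_sub_cancel, Int.toNat_natCast,
      two_mul]
    ring

end FiniteTripleProduct

/-! ### The Jacobi triple product -/

section TripleProduct

variable {𝕜 : Type*} [NormedField 𝕜] {q : 𝕜}

lemma qPochhammer_ne_zero (hq : ‖q‖ < 1) (n : ℕ) : qPochhammer q n ≠ 0 := by
  refine Finset.prod_ne_zero_iff.2 fun k _ hk => ?_
  have hlt : ‖q ^ (k + 1)‖ < 1 := by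
    simpa only [norm_pow] using pow_lt_one₀ (norm_nonneg q) hq k.succ_ne_zero
  rw [← sub_eq_zero.1 hk, norm_one] at hlt
  exact lt_irrefl 1 hlt

lemma gaussBinom_add_eq_div (hq : ‖q‖ < 1) (m k : ℕ) :
    gaussBinom q (m + k) m = qPochhammer q (m + k) / (qPochhammer q m * qPochhammer q k) :=
  eq_div_of_mul_eq (mul_ne_zero (qPochhammer_ne_zero hq m) (qPochhammer_ne_zero hq k))
    (gaussBinom_mul_qPochhammer_mul_qPochhammer q m k)

lemma summable_norm_mul_pow_comp (hq : ‖q‖ < 1) (z : 𝕜) {e : ℕ → ℕ} (he : e.Injective) :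
    Summable fun k => ‖z * q ^ e k‖ := by
  simpa only [norm_mul, norm_pow, Function.comp_def] using
    ((summable_geometric_of_lt_one (norm_nonneg q) hq).comp_injective he).mul_left ‖z‖

lemma summable_norm_zpow_mul_zpow_sq {z : 𝕜} (hq : ‖q‖ < 1) (hq0 : q ≠ 0) (hz : z ≠ 0) :
    Summable fun j : ℤ => ‖z ^ j * q ^ (j ^ 2)‖ := by
  set τ : ℂ := ((-Real.log ‖q‖ / Real.pi : ℝ) : ℂ) * Complex.I with hτ
  set w : ℂ := ((-Real.log ‖z‖ / (2 * Real.pi) : ℝ) : ℂ) * Complex.I with hw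
  have hτ_im : τ.im = -Real.log ‖q‖ / Real.pi := by rw [hτ, Complex.im_ofReal_mul]; simp
  have hw_im : w.im = -Real.log ‖z‖ / (2 * Real.pi) := by rw [hw, Complex.im_ofReal_mul]; simp
  have hτ_pos : 0 < τ.im := by
    rw [hτ_im]
    exact div_pos (neg_pos.2 (Real.log_neg (norm_pos_iff.2 hq0) hq)) Real.pi_pos
  refine ((summable_jacobiTheta₂_term_iff w τ).2 hτ_pos).norm.congr fun j => ?_
  rw [norm_jacobiTheta₂_term, hτ_im, hw_im, norm_mul, norm_zpow, norm_zpow,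
    ← Real.rpow_intCast, ← Real.rpow_intCast, Real.rpow_def_of_pos (norm_pos_iff.2 hz),
    Real.rpow_def_of_pos (norm_pos_iff.2 hq0), ← Real.exp_add]
  congr 1
  push_cast
  field_simp
  ring

variable [CompleteSpace 𝕜]

lemma multipliable_one_add_mul_pow_comp (hq : ‖q‖ < 1) (z : 𝕜) {e : ℕ → ℕ} (he : e.Injective) :
    Multipliable fun k => 1 + z * q ^ e k :=
  multipliable_one_add_of_summable (summable_norm_mul_pow_comp hq z he)

lemma multipliable_one_sub_pow_comp (hq : ‖q‖ < 1) {e : ℕ → ℕ} (he : e.Injective) :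
    Multipliable fun k => 1 - q ^ e k := by
  simpa only [neg_one_mul, ← sub_eq_add_neg] using multipliable_one_add_mul_pow_comp hq (-1) he

lemma tendsto_qPochhammer (hq : ‖q‖ < 1) :
    Tendsto (qPochhammer q) atTop (𝓝 (∏' k : ℕ, (1 - q ^ (k + 1)))) :=
  (multipliable_one_sub_pow_comp hq (add_left_injective 1)).hasProd.tendsto_prod_nat

lemma tprod_one_sub_pow_succ_ne_zero (hq : ‖q‖ < 1) : ∏' k : ℕ, (1 - q ^ (k + 1)) ≠ 0 := by
  have hfactor (k : ℕ) : 1 + -1 * q ^ (k + 1) ≠ 0 := by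
    have h := qPochhammer_ne_zero hq (k + 1)
    rw [qPochhammer_succ] at h
    simpa only [neg_one_mul, ← sub_eq_add_neg] using right_ne_zero_of_mul h
  simpa only [neg_one_mul, ← sub_eq_add_neg] using tprod_one_add_ne_zero_of_summable hfactor
    (summable_norm_mul_pow_comp hq (-1) (add_left_injective 1))

lemma tendsto_gaussBinom_central (hq : ‖q‖ < 1) (j : ℤ) :
    Tendsto (fun n : ℕ => gaussBinom q (2 * n) (n + j).toNat) atTop
      (𝓝 (∏' k : ℕ, (1 - q ^ (k + 1)))⁻¹) := by
  set P := ∏' k : ℕ, (1 - q ^ (k + 1))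
  have hP : Tendsto (qPochhammer q) atTop (𝓝 P) := tendsto_qPochhammer hq
  have hP0 : P ≠ 0 := tprod_one_sub_pow_succ_ne_zero hq
  have hshift (i : ℤ) : Tendsto (fun n : ℕ => (n + i).toNat) atTop atTop :=
    tendsto_atTop.2 fun b => (eventually_ge_atTop (b + i.natAbs)).mono fun n hn => by omega
  have hdouble : Tendsto (fun n : ℕ => 2 * n) atTop atTop := tendsto_id.const_mul_atTop' two_pos
  have hlim := (hP.comp hdouble).div ((hP.comp (hshift j)).mul (hP.comp (hshift (-j))))
    (mul_ne_zero hP0 hP0)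
  rw [← div_div, div_self hP0, one_div] at hlim
  refine hlim.congr' ((eventually_ge_atTop j.natAbs).mono fun n hn => ?_)
  have hsum : 2 * n = (n + j).toNat + (n + -j).toNat := by omega
  simp only [Pi.div_apply, Function.comp_apply]
  rw [hsum, gaussBinom_add_eq_div hq]

lemma exists_norm_gaussBinom_le (hq : ‖q‖ < 1) : ∃ C, ∀ n m, ‖gaussBinom q n m‖ ≤ C := by
  have hP := tendsto_qPochhammer hq
  obtain ⟨A, hA_mem⟩ := hP.norm.bddAbove_range
  obtain ⟨B, hB_mem⟩ := (hP.inv₀ (tprod_one_sub_pow_succ_ne_zero hq)).norm.bddAbove_range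
  have hA (n : ℕ) : ‖qPochhammer q n‖ ≤ A := hA_mem ⟨n, rfl⟩
  have hB (n : ℕ) : ‖(qPochhammer q n)⁻¹‖ ≤ B := hB_mem ⟨n, rfl⟩
  have hA0 : 0 ≤ A := (norm_nonneg _).trans (hA 0)
  have hB0 : 0 ≤ B := (norm_nonneg _).trans (hB 0)
  refine ⟨A * (B * B), fun n m => ?_⟩
  rcases lt_or_ge n m with hnm | hmn
  · rw [gaussBinom_eq_zero_of_lt q hnm, norm_zero]
    positivity
  · obtain ⟨k, rfl⟩ := Nat.exists_eq_add_of_le hmn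
    rw [gaussBinom_add_eq_div hq, div_eq_mul_inv, mul_inv, norm_mul, norm_mul]
    gcongr
    exacts [hA _, hB _, hB _]

/-- Tannery's theorem applied to the finite triple product. -/
lemma tendsto_prod_one_add_odd_pow {z : 𝕜} (hq : ‖q‖ < 1) (hq0 : q ≠ 0) (hz : z ≠ 0) :
    Tendsto
      (fun n => ∏ k ∈ Finset.range n, (1 + z * q ^ (2 * k + 1)) * (1 + z⁻¹ * q ^ (2 * k + 1)))
      atTop (𝓝 ((∏' k : ℕ, (1 - (q ^ 2) ^ (k + 1)))⁻¹ * ∑' j : ℤ, z ^ j * q ^ (j ^ 2))) := by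
  have hq2 : ‖q ^ 2‖ < 1 := by
    simpa only [norm_pow] using pow_lt_one₀ (norm_nonneg q) hq two_ne_zero
  obtain ⟨C, hC⟩ := exists_norm_gaussBinom_le hq2
  set a : ℤ → 𝕜 := fun j => z ^ j * q ^ (j ^ 2)
  let b (n : ℕ) (j : ℤ) : 𝕜 := gaussBinom (q ^ 2) (2 * n) (n + j).toNat * a j
  have hterm (j : ℤ) : Tendsto (fun n : ℕ => (Finset.Icc (-n : ℤ) n : Set ℤ).indicator (b n) j)
      atTop (𝓝 ((∏' k : ℕ, (1 - (q ^ 2) ^ (k + 1)))⁻¹ * a j)) := by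
    refine ((tendsto_gaussBinom_central hq2 j).mul_const (a j)).congr'
      ((eventually_ge_atTop j.natAbs).mono fun n hn => (Set.indicator_of_mem ?_ _).symm)
    rw [Finset.mem_coe, Finset.mem_Icc]
    omega
  have hbound (n : ℕ) (j : ℤ) :
      ‖(Finset.Icc (-n : ℤ) n : Set ℤ).indicator (b n) j‖ ≤ C * ‖a j‖ := by
    refine (norm_indicator_le_norm_self _ _).trans ?_
    rw [norm_mul]
    gcongr
    exact hC _ _
  rw [← tsum_mul_left]
  refine (tendsto_tsum_of_dominated_convergence
    ((summable_norm_zpow_mul_zpow_sq hq hq0 hz).mul_left C) hterm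
    (Eventually.of_forall hbound)).congr fun n => ?_
  rw [← sum_eq_tsum_indicator, prod_one_add_odd_pow_eq_sum_gaussBinom hq0 hz]

theorem hasProd_jacobi_triple_product {z : 𝕜} (hq : ‖q‖ < 1) (hz : z ≠ 0) :
    HasProd (fun k : ℕ => (1 - q ^ (2 * k + 2)) *
      ((1 + z * q ^ (2 * k + 1)) * (1 + z⁻¹ * q ^ (2 * k + 1))))
      (∑' j : ℤ, z ^ j * q ^ (j ^ 2)) := by
  rcases eq_or_ne q 0 with rfl | hq0
  · rw [tsum_eq_single 0 fun j hj => by rw [zero_zpow _ (pow_ne_zero 2 hj), mul_zero]]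
    simp [hasProd_one]
  have hq2 : ‖q ^ 2‖ < 1 := by
    simpa only [norm_pow] using pow_lt_one₀ (norm_nonneg q) hq two_ne_zero
  have hodd : (fun k : ℕ => 2 * k + 1).Injective := fun k l h => by simpa using h
  have hmult := (multipliable_one_add_mul_pow_comp hq z hodd).mul
    (multipliable_one_add_mul_pow_comp hq z⁻¹ hodd)
  have heuler := multipliable_one_sub_pow_comp hq2 (add_left_injective 1)
  have hprod := heuler.hasProd.mul hmult.hasProd
  rw [tendsto_nhds_unique hmult.hasProd.tendsto_prod_nat (tendsto_prod_one_add_odd_pow hq hq0 hz),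
    mul_inv_cancel_left₀ (tprod_one_sub_pow_succ_ne_zero hq2)] at hprod
  simpa only [← pow_mul, mul_add, mul_one] using hprod

end TripleProduct

/-! ### Strict geometric concavity -/

/-- The elasticity `x F'(x) / F(x)` of `F`, i.e. the slope of `log F` as a function of `log x`. -/
noncomputable def elasticity (F : ℝ → ℝ) (x : ℝ) : ℝ :=
  x * logDeriv F x

/-- `F` is positive and differentiable on the positive half-line, where `log F` is a strictly
concave function of `log x`; concavity is encoded as strict decrease of the elasticity. -/
structure StrictGeomConcave (F : ℝ → ℝ) : Prop where
  pos : ∀ ⦃x⦄, 0 < x → 0 < F x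
  differentiableAt : ∀ ⦃x⦄, 0 < x → DifferentiableAt ℝ F x
  strictAntiOn_elasticity : StrictAntiOn (elasticity F) (Set.Ioi 0)

namespace StrictGeomConcave

variable {F G : ℝ → ℝ}

lemma exp_comp {L L' : ℝ → ℝ} (hL : ∀ x, 0 < x → HasDerivAt L (L' x) x)
    (hanti : StrictAntiOn (fun x => x * L' x) (Set.Ioi 0)) :
    StrictGeomConcave fun x => Real.exp (L x) where
  pos _ _ := Real.exp_pos _
  differentiableAt x hx := (hL x hx).exp.differentiableAt
  strictAntiOn_elasticity := hanti.congr fun x hx => by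
    rw [elasticity, logDeriv_apply, (hL x hx).exp.deriv,
      mul_div_cancel_left₀ _ (Real.exp_ne_zero _)]

lemma congr (hF : StrictGeomConcave F) (h : Set.EqOn F G (Set.Ioi 0)) : StrictGeomConcave G := by
  have hev {x : ℝ} (hx : 0 < x) : F =ᶠ[𝓝 x] G := h.eventuallyEq_of_mem (Ioi_mem_nhds hx)
  exact {
    pos := fun x hx => h hx ▸ hF.pos hx
    differentiableAt := fun x hx => (hev hx).differentiableAt_iff.1 (hF.differentiableAt hx)
    strictAntiOn_elasticity := hF.strictAntiOn_elasticity.congr fun x hx => by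
      rw [elasticity, elasticity, (logDeriv_congr_nhds (hev hx)).eq_of_nhds] }

lemma mul (hF : StrictGeomConcave F) (hG : StrictGeomConcave G) :
    StrictGeomConcave fun x => F x * G x where
  pos x hx := mul_pos (hF.pos hx) (hG.pos hx)
  differentiableAt x hx := (hF.differentiableAt hx).mul (hG.differentiableAt hx)
  strictAntiOn_elasticity :=
    (hF.strictAntiOn_elasticity.add hG.strictAntiOn_elasticity).congr fun x hx => by
      simp only [elasticity]
      rw [← mul_add, logDeriv_mul x (hF.pos hx).ne' (hG.pos hx).ne' (hF.differentiableAt hx)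
        (hG.differentiableAt hx)]

lemma zpow_mul (n : ℤ) (hF : StrictGeomConcave F) : StrictGeomConcave fun x => x ^ n * F x where
  pos x hx := mul_pos (zpow_pos hx n) (hF.pos hx)
  differentiableAt x hx := (differentiableAt_zpow.2 (.inl hx.ne')).mul (hF.differentiableAt hx)
  strictAntiOn_elasticity := (hF.strictAntiOn_elasticity.const_add (n : ℝ)).congr fun x hx => by
    have hx0 : x ≠ 0 := ne_of_gt hx
    simp only [elasticity]
    rw [logDeriv_mul (f := fun y => y ^ n) x (zpow_ne_zero n hx0) (hF.pos hx).ne'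
      (differentiableAt_zpow.2 (.inl hx0)) (hF.differentiableAt hx), logDeriv_zpow, mul_add,
      mul_div_cancel₀ _ hx0]

lemma comp_inv (hF : StrictGeomConcave F) : StrictGeomConcave fun x => F x⁻¹ where
  pos x hx := hF.pos (inv_pos.2 hx)
  differentiableAt x hx :=
    (hF.differentiableAt (inv_pos.2 hx)).comp x (differentiableAt_inv hx.ne')
  strictAntiOn_elasticity := by
    have helast : Set.EqOn (fun x => -elasticity F x⁻¹) (elasticity fun x => F x⁻¹) (Set.Ioi 0) :=
      fun x hx => by
        have hx0 : x ≠ 0 := ne_of_gt hx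
        simp only [elasticity]
        rw [show (fun y : ℝ => F y⁻¹) = F ∘ Inv.inv from rfl,
          logDeriv_comp (hF.differentiableAt (inv_pos.2 hx)) (differentiableAt_inv hx0), deriv_inv]
        field_simp
    refine StrictAntiOn.congr (fun x hx y hy hxy => ?_) helast
    exact neg_lt_neg (hF.strictAntiOn_elasticity (Set.mem_Ioi.2 (inv_pos.2 hy))
      (Set.mem_Ioi.2 (inv_pos.2 hx)) (inv_strictAnti₀ hx hxy))

end StrictGeomConcave

lemma strictAntiOn_div_exp_sub_one :
    StrictAntiOn (fun s : ℝ => s / (Real.exp s - 1)) (Set.Ioi 0) := by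
  intro s hs t ht hst
  have hexp {u : ℝ} (hu : 0 < u) : 0 < Real.exp u - 1 := sub_pos.2 (Real.one_lt_exp_iff.2 hu)
  have hslope := strictConvexOn_exp.secant_strict_mono (Set.mem_univ 0) (Set.mem_univ s)
    (Set.mem_univ t) (ne_of_gt hs) (ne_of_gt ht) hst
  simp only [Real.exp_zero, sub_zero] at hslope
  simpa only [inv_div] using inv_strictAnti₀ (div_pos (hexp hs) hs) hslope

lemma div_exp_sub_one_le_exp_neg_half {s : ℝ} (hs : 0 < s) :
    s / (Real.exp s - 1) ≤ Real.exp (-(s / 2)) := by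
  have hsinh : s / 2 ≤ Real.sinh (s / 2) := Real.self_le_sinh_iff.2 (by positivity)
  have hexp : 0 < Real.exp s - 1 := sub_pos.2 (Real.one_lt_exp_iff.2 hs)
  rw [div_le_iff₀ hexp]
  calc s ≤ 2 * Real.sinh (s / 2) := by linarith
    _ = Real.exp (-(s / 2)) * (Real.exp s - 1) := by
      rw [Real.sinh_eq, mul_sub, ← Real.exp_add]; ring_nf

lemma hasDerivAt_log_one_sub_exp_neg_mul {a x : ℝ} (h : 0 < a * x) :
    HasDerivAt (fun y => Real.log (1 - Real.exp (-(a * y)))) (a / (Real.exp (a * x) - 1)) x := by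
  have hfactor : 0 < 1 - Real.exp (-(a * x)) := sub_pos.2 (Real.exp_lt_one_iff.2 (neg_neg_of_pos h))
  have hexp : 0 < Real.exp (a * x) - 1 := sub_pos.2 (Real.one_lt_exp_iff.2 h)
  have hlin : HasDerivAt (fun y => -(a * y)) (-a) x := by
    simpa only [mul_one] using ((hasDerivAt_id' x).const_mul a).fun_neg
  refine ((hlin.exp.const_sub 1).log hfactor.ne').congr_deriv ?_
  rw [div_eq_div_iff hfactor.ne' hexp.ne', Real.exp_neg]
  field_simp

section ExpProduct

variable {ι : Type*} {a : ι → ℝ}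

lemma div_exp_mul_sub_one_le {b ε x : ℝ} (hb : 0 < b) (hε : 0 < ε) (hx : ε ≤ x) :
    b / (Real.exp (b * x) - 1) ≤ Real.exp (-(b * (ε / 2))) / ε := by
  have hx0 : 0 < x := hε.trans_le hx
  calc b / (Real.exp (b * x) - 1) = b * x / (Real.exp (b * x) - 1) / x := by field_simp
    _ ≤ Real.exp (-(b * x / 2)) / x := by
      gcongr; exact div_exp_sub_one_le_exp_neg_half (mul_pos hb hx0)
    _ ≤ Real.exp (-(b * (ε / 2))) / ε := by
      rw [mul_div_assoc]; gcongr

lemma summable_log_one_sub_exp_neg_mul {x : ℝ} (hs : Summable fun i => Real.exp (-(a i * x))) :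
    Summable fun i => Real.log (1 - Real.exp (-(a i * x))) := by
  simpa only [sub_eq_add_neg] using Real.summable_log_one_add_of_summable hs.neg

lemma summable_div_exp_mul_sub_one (ha : ∀ i, 0 < a i)
    (hs : ∀ x, 0 < x → Summable fun i => Real.exp (-(a i * x))) {x : ℝ} (hx : 0 < x) :
    Summable fun i => a i / (Real.exp (a i * x) - 1) :=
  ((hs (x / 2) (half_pos hx)).div_const x).of_nonneg_of_le
    (fun i => div_nonneg (ha i).le (sub_nonneg.2 (Real.one_le_exp (mul_pos (ha i) hx).le)))
    fun i => div_exp_mul_sub_one_le (ha i) hx le_rfl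

lemma hasDerivAt_tsum_log_one_sub_exp_neg_mul (ha : ∀ i, 0 < a i)
    (hs : ∀ x, 0 < x → Summable fun i => Real.exp (-(a i * x))) {x : ℝ} (hx : 0 < x) :
    HasDerivAt (fun y => ∑' i, Real.log (1 - Real.exp (-(a i * y))))
      (∑' i, a i / (Real.exp (a i * x) - 1)) x := by
  have hε : 0 < x / 2 := half_pos hx
  refine hasDerivAt_tsum_of_isPreconnected (t := Set.Ioi (x / 2))
    (g' := fun i y => a i / (Real.exp (a i * y) - 1))
    ((hs _ (half_pos hε)).div_const (x / 2)) isOpen_Ioi isPreconnected_Ioi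
    (fun i y hy => ?_) (fun i y hy => ?_) (half_lt_self hx)
    (summable_log_one_sub_exp_neg_mul (hs x hx)) (half_lt_self hx)
  · exact hasDerivAt_log_one_sub_exp_neg_mul (mul_pos (ha i) (hε.trans hy))
  · have hexp : 1 < Real.exp (a i * y) := Real.one_lt_exp_iff.2 (mul_pos (ha i) (hε.trans hy))
    rw [Real.norm_of_nonneg (div_nonneg (ha i).le (sub_nonneg.2 hexp.le))]
    exact div_exp_mul_sub_one_le (ha i) hε (le_of_lt hy)

lemma strictAntiOn_mul_tsum_div_exp_mul_sub_one [Nonempty ι] (ha : ∀ i, 0 < a i)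
    (hs : ∀ x, 0 < x → Summable fun i => Real.exp (-(a i * x))) :
    StrictAntiOn (fun x => x * ∑' i, a i / (Real.exp (a i * x) - 1)) (Set.Ioi 0) := by
  intro x hx y hy hxy
  have hterm (i : ι) : y * (a i / (Real.exp (a i * y) - 1)) <
      x * (a i / (Real.exp (a i * x) - 1)) := by
    simpa only [mul_div_assoc', mul_comm (a i)] using
      strictAntiOn_div_exp_sub_one (mul_pos (ha i) hx) (mul_pos (ha i) hy)
        (mul_lt_mul_of_pos_left hxy (ha i))
  simp only [← tsum_mul_left]
  exact Summable.tsum_lt_tsum (fun i => (hterm i).le) (hterm (Classical.arbitrary ι))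
    ((summable_div_exp_mul_sub_one ha hs hy).mul_left y)
    ((summable_div_exp_mul_sub_one ha hs hx).mul_left x)

theorem strictGeomConcave_tprod_one_sub_exp_neg_mul [Nonempty ι] (ha : ∀ i, 0 < a i)
    (hs : ∀ x, 0 < x → Summable fun i => Real.exp (-(a i * x))) :
    StrictGeomConcave fun x => ∏' i, (1 - Real.exp (-(a i * x))) :=
  (StrictGeomConcave.exp_comp (fun _ hx => hasDerivAt_tsum_log_one_sub_exp_neg_mul ha hs hx)
    (strictAntiOn_mul_tsum_div_exp_mul_sub_one ha hs)).congr fun x hx =>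
      Real.rexp_tsum_eq_tprod
        (fun i => sub_pos.2 (Real.exp_lt_one_iff.2 (neg_neg_of_pos (mul_pos (ha i) hx))))
        (summable_log_one_sub_exp_neg_mul (hs x hx))

end ExpProduct

/-! ### Products and inversion of theta functions -/

section ThetaFunctions

open HurwitzZeta

lemma norm_exp_neg_mul_lt_one {b x : ℝ} (h : 0 < b * x) : ‖Real.exp (-(b * x))‖ < 1 := by
  rwa [Real.norm_of_nonneg (Real.exp_pos _).le, Real.exp_lt_one_iff, neg_lt_zero]

lemma strictGeomConcave_tprod_one_sub_exp_pow {b : ℝ} (hb : 0 < b) {e : ℕ → ℕ}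
    (he : e.Injective) (he0 : ∀ k, e k ≠ 0) :
    StrictGeomConcave fun x => ∏' k, (1 - Real.exp (-(b * x)) ^ e k) := by
  have hpow (x : ℝ) (k : ℕ) : Real.exp (-(b * e k * x)) = Real.exp (-(b * x)) ^ e k := by
    rw [← Real.exp_nat_mul]; ring_nf
  simp only [← hpow]
  refine strictGeomConcave_tprod_one_sub_exp_neg_mul
    (fun k => mul_pos hb (Nat.cast_pos.2 (Nat.pos_of_ne_zero (he0 k)))) fun x hx => ?_
  simpa only [hpow, one_mul] using
    (summable_norm_mul_pow_comp (norm_exp_neg_mul_lt_one (mul_pos hb hx)) 1 he).of_norm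

lemma exp_neg_pi_mul_sq_mul (j : ℤ) (x : ℝ) :
    Real.exp (-Real.pi * (j : ℝ) ^ 2 * x) = Real.exp (-(Real.pi * x)) ^ (j ^ 2) := by
  rw [← Real.rpow_intCast, ← Real.exp_mul]
  push_cast
  ring_nf

theorem theta3_mul_theta4 {x : ℝ} (hx : 0 < x) :
    theta3 x * theta4 x =
      ((∏' k : ℕ, (1 - Real.exp (-(Real.pi * x)) ^ (2 * k + 2))) *
        ∏' k : ℕ, (1 - Real.exp (-(Real.pi * x)) ^ (4 * k + 2))) ^ 2 := by
  simp only [theta3, theta4, exp_neg_pi_mul_sq_mul]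
  have hq := norm_exp_neg_mul_lt_one (mul_pos Real.pi_pos hx)
  generalize Real.exp (-(Real.pi * x)) = q at hq
  have htheta3 := hasProd_jacobi_triple_product hq one_ne_zero
  have htheta4 := hasProd_jacobi_triple_product hq (neg_ne_zero.2 one_ne_zero)
  have heven := (multipliable_one_sub_pow_comp hq (e := fun k => 2 * k + 2)
    fun k l h => by simpa using h).hasProd
  have hodd := (multipliable_one_sub_pow_comp hq (e := fun k => 4 * k + 2)
    fun k l h => by simpa using h).hasProd
  have hsq := (heven.mul hodd).mul (heven.mul hodd)
  simp only [one_zpow, one_mul] at htheta3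
  rw [sq]
  refine (htheta3.mul htheta4).unique (hsq.congr_fun fun k => ?_)
  rw [inv_one, inv_neg, inv_one, show 4 * k + 2 = (2 * k + 1) + (2 * k + 1) by ring, pow_add]
  ring

lemma theta2_eq_evenKernel {x : ℝ} (hx : 0 < x) : theta2 x = evenKernel ↑(1 / 2 : ℝ) x :=
  (hasSum_int_evenKernel (1 / 2) hx).tsum_eq

lemma theta3_eq_evenKernel {x : ℝ} (hx : 0 < x) : theta3 x = evenKernel 0 x := by
  simpa only [theta3, add_zero, QuotientAddGroup.mk_zero] using (hasSum_int_evenKernel 0 hx).tsum_eq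

lemma theta4_eq_cosKernel {x : ℝ} (hx : 0 < x) : theta4 x = cosKernel ↑(1 / 2 : ℝ) x := by
  refine HasSum.tsum_eq (Complex.hasSum_ofReal.1
    ((hasSum_int_cosKernel (1 / 2) hx).congr_fun fun n => ?_))
  rw [show 2 * Real.pi * Complex.I * ((1 / 2 : ℝ) : ℂ) * n = n * (Real.pi * Complex.I) by
    push_cast; ring, Complex.exp_int_mul, Complex.exp_pi_mul_I]
  push_cast
  rfl

theorem theta2_mul_theta3 {x : ℝ} (hx : 0 < x) :
    theta2 x * theta3 x = x⁻¹ * (theta3 x⁻¹ * theta4 x⁻¹) := by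
  have hsqrt : x ^ (1 / 2 : ℝ) * x ^ (1 / 2 : ℝ) = x := by
    rw [← Real.rpow_add hx, add_halves, Real.rpow_one]
  rw [theta2_eq_evenKernel hx, theta3_eq_evenKernel hx, theta3_eq_evenKernel (inv_pos.2 hx),
    theta4_eq_cosKernel (inv_pos.2 hx), evenKernel_functional_equation _ x,
    evenKernel_functional_equation 0 x, ← evenKernel_eq_cosKernel_of_zero, one_div x,
    mul_mul_mul_comm, one_div_mul_one_div_rev, hsqrt, one_div]
  ring

theorem strictGeomConcave_theta3_mul_theta4 : StrictGeomConcave fun x => theta3 x * theta4 x := by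
  have hhalf := (strictGeomConcave_tprod_one_sub_exp_pow Real.pi_pos (e := fun k => 2 * k + 2)
    (fun k l h => by simpa using h) fun k => by simp).mul
    (strictGeomConcave_tprod_one_sub_exp_pow Real.pi_pos (e := fun k => 4 * k + 2)
    (fun k l h => by simpa using h) fun k => by simp)
  exact (hhalf.mul hhalf).congr fun x hx => by rw [theta3_mul_theta4 hx, sq]

theorem strictGeomConcave_theta2_mul_theta3 : StrictGeomConcave fun x => theta2 x * theta3 x :=
  (strictGeomConcave_theta3_mul_theta4.comp_inv.zpow_mul (-1)).congr fun x hx => by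
    simp only [theta2_mul_theta3 (Set.mem_Ioi.1 hx), zpow_neg_one]

end ThetaFunctions

/-! ### Products of geometrically concave functions along `c ^ t * α` -/

section Peak

/-- `f` is critical at `a`, has positive derivative before `a` and negative derivative after `a`,
and attains its strict global maximum at `a`. -/
def HasStrictPeakAt (f : ℝ → ℝ) (a : ℝ) : Prop :=
  deriv f a = 0 ∧ (∀ t, t < a → 0 < deriv f t) ∧ (∀ t, a < t → deriv f t < 0) ∧
    ∀ t, t ≠ a → f t < f a

lemma hasStrictPeakAt_of_strictAnti_logDeriv {f : ℝ → ℝ} {a : ℝ} (hpos : ∀ t, 0 < f t)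
    (hf : Continuous f) (hanti : StrictAnti (logDeriv f)) (ha : logDeriv f a = 0) :
    HasStrictPeakAt f a := by
  have hderiv (t : ℝ) : deriv f t = f t * logDeriv f t := (mul_div_cancel₀ _ (hpos t).ne').symm
  have hleft (t : ℝ) (ht : t < a) : 0 < deriv f t := by
    rw [hderiv]
    exact mul_pos (hpos t) (ha ▸ hanti ht)
  have hright (t : ℝ) (ht : a < t) : deriv f t < 0 := by
    rw [hderiv]
    exact mul_neg_of_pos_of_neg (hpos t) (ha ▸ hanti ht)
  refine ⟨by rw [hderiv, ha, mul_zero], hleft, hright, fun t ht => ?_⟩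
  rcases ht.lt_or_gt with hlt | hgt
  · exact strictMonoOn_of_deriv_pos (convex_Iic a) hf.continuousOn
      (fun s hs => hleft s (by simpa using hs)) hlt.le Set.self_mem_Iic hlt
  · exact strictAntiOn_of_deriv_neg (convex_Ici a) hf.continuousOn
      (fun s hs => hright s (by simpa using hs)) Set.self_mem_Ici hgt.le hgt

namespace StrictGeomConcave

variable {F : ℝ → ℝ} {c α : ℝ}

lemma differentiable_comp_rpow_mul (hF : StrictGeomConcave F) (hc : 0 < c) (hα : 0 < α) :
    Differentiable ℝ fun t : ℝ => F (c ^ t * α) := fun t =>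
  (hF.differentiableAt (mul_pos (Real.rpow_pos_of_pos hc t) hα)).comp t
    ((Real.hasStrictDerivAt_const_rpow hc t).hasDerivAt.mul_const α).differentiableAt

lemma logDeriv_comp_rpow_mul (hF : StrictGeomConcave F) (hc : 0 < c) (hα : 0 < α) (t : ℝ) :
    logDeriv (fun t : ℝ => F (c ^ t * α)) t = Real.log c * elasticity F (c ^ t * α) := by
  have hinner := (Real.hasStrictDerivAt_const_rpow hc t).hasDerivAt.mul_const α
  rw [show (fun t : ℝ => F (c ^ t * α)) = F ∘ fun t : ℝ => c ^ t * α from rfl,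
    logDeriv_comp (g := fun t : ℝ => c ^ t * α)
      (hF.differentiableAt (mul_pos (Real.rpow_pos_of_pos hc t) hα)) hinner.differentiableAt,
      hinner.deriv, elasticity]
  ring

lemma strictAnti_log_mul_elasticity (hF : StrictGeomConcave F) (hc : 0 < c) (hc1 : c ≠ 1)
    (hα : 0 < α) : StrictAnti fun t : ℝ => Real.log c * elasticity F (c ^ t * α) := by
  have hmem (t : ℝ) : c ^ t * α ∈ Set.Ioi 0 := mul_pos (Real.rpow_pos_of_pos hc t) hα
  intro s t hst
  rcases hc1.lt_or_gt with hlt | hgt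
  · exact mul_lt_mul_of_neg_left (hF.strictAntiOn_elasticity (hmem t) (hmem s)
      (mul_lt_mul_of_pos_right (Real.rpow_lt_rpow_of_exponent_gt hc hlt hst) hα))
      (Real.log_neg hc hlt)
  · exact mul_lt_mul_of_pos_left (hF.strictAntiOn_elasticity (hmem s) (hmem t)
      (mul_lt_mul_of_pos_right (Real.rpow_lt_rpow_of_exponent_lt hgt hst) hα))
      (Real.log_pos hgt)

theorem hasStrictPeakAt_prod {ι : Type*} [Fintype ι] (hF : StrictGeomConcave F) {c : ι → ℝ}
    (hc : ∀ i, 0 < c i) (hprod : ∏ i, c i = 1) (hne : ¬ ∀ i, c i = 1) (hα : 0 < α) :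
    HasStrictPeakAt (fun t : ℝ => ∏ i, F (c i ^ t * α)) 0 := by
  have hpos (i : ι) (t : ℝ) : 0 < F (c i ^ t * α) :=
    hF.pos (mul_pos (Real.rpow_pos_of_pos (hc i) t) hα)
  have hdiff (i : ι) : Differentiable ℝ fun t : ℝ => F (c i ^ t * α) :=
    hF.differentiable_comp_rpow_mul (hc i) hα
  have hlogDeriv : logDeriv (fun t : ℝ => ∏ i, F (c i ^ t * α)) =
      fun t : ℝ => ∑ i, Real.log (c i) * elasticity F (c i ^ t * α) := by
    funext t
    rw [logDeriv_prod (fun i _ => (hpos i t).ne') fun i _ => hdiff i t]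
    exact Finset.sum_congr rfl fun i _ => hF.logDeriv_comp_rpow_mul (hc i) hα t
  refine hasStrictPeakAt_of_strictAnti_logDeriv (fun t : ℝ => Finset.prod_pos fun i _ => hpos i t)
    (continuous_finsetProd _ fun i _ => (hdiff i).continuous) ?_ ?_
  · rw [hlogDeriv]
    intro s t hst
    obtain ⟨i₀, hi₀⟩ := not_forall.1 hne
    refine Finset.sum_lt_sum (fun i _ => ?_) ⟨i₀, Finset.mem_univ i₀,
      hF.strictAnti_log_mul_elasticity (hc i₀) hi₀ hα hst⟩
    rcases eq_or_ne (c i) 1 with hi | hi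
    · simp [hi]
    · exact (hF.strictAnti_log_mul_elasticity (hc i) hi hα).antitone hst.le
  · have hlog : ∑ i, Real.log (c i) = 0 := by
      rw [← Real.log_prod fun i _ => (hc i).ne', hprod, Real.log_one]
    simp only [hlogDeriv, Real.rpow_zero, ← Finset.sum_mul, hlog, zero_mul]

end StrictGeomConcave

end Peak

/-- with `c_i > 0`, `∏ c_i = 1`, not all `c_i = 1`, the functions
`P₃₄(t) = ∏ θ₃(c_i^t α)θ₄(c_i^t α)` and `P₂₃(t) = ∏ θ₂(c_i^t α)θ₃(c_i^t α)` both satisfy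
`f'(0)=0`, `f' > 0` on `t<0`, `f' < 0` on `t>0`; in particular `t = 0` is the unique
strict maximum of each. -/
theorem P34_P23_unique_maximum
    (d : ℕ) (hd : 1 ≤ d) (α : ℝ) (hα : 0 < α)
    (c : Fin d → ℝ) (hc : ∀ i, 0 < c i) (hprod : ∏ i, c i = 1)
    (hne : ¬ ∀ i, c i = 1)
    (P34 P23 : ℝ → ℝ)
    (hP34 : ∀ t : ℝ, P34 t = ∏ i, theta3 (Real.rpow (c i) t * α) * theta4 (Real.rpow (c i) t * α))
    (hP23 : ∀ t : ℝ, P23 t = ∏ i, theta2 (Real.rpow (c i) t * α) * theta3 (Real.rpow (c i) t * α)) :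
    (deriv P34 0 = 0 ∧ (∀ t : ℝ, t < 0 → 0 < deriv P34 t) ∧
      (∀ t : ℝ, 0 < t → deriv P34 t < 0) ∧ (∀ t : ℝ, t ≠ 0 → P34 t < P34 0)) ∧
    (deriv P23 0 = 0 ∧ (∀ t : ℝ, t < 0 → 0 < deriv P23 t) ∧
      (∀ t : ℝ, 0 < t → deriv P23 t < 0) ∧ (∀ t : ℝ, t ≠ 0 → P23 t < P23 0)) := by
  obtain rfl : P34 = fun t => ∏ i, theta3 (c i ^ t * α) * theta4 (c i ^ t * α) := funext hP34
  obtain rfl : P23 = fun t => ∏ i, theta2 (c i ^ t * α) * theta3 (c i ^ t * α) := funext hP23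
  exact ⟨strictGeomConcave_theta3_mul_theta4.hasStrictPeakAt_prod hc hprod hne hα,
    strictGeomConcave_theta2_mul_theta3.hasStrictPeakAt_prod hc hprod hne hα⟩
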